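/- arXiv:2207.03284 — 4 statements merged into one kernel-verified Lean document; each statement's English description precedes it below -/
import Mathlib

section
/- Let j be a positive integer, let 1 ≤ l ≤ j, and let j_1,…,j_l be positive integers with j_1+…+j_l = j. Then the number of partitions λ = (λ_1,…,λ_l) in P^a(j) with |λ_i| = j_i for every 1 ≤ i ≤ l equals N(j_1,…,j_l) = ∏_{i=2}^{l} C(j_1+…+j_i − 1, j_i − 1), where C(a,b) denotes the binomial coefficient. -/
/-!
The count goes block by block from the right, over an arbitrary finite ground set `S` of natural
numbers. In an anti-lexicographically ordered partition of `S` the last block contains the maximum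
`M` of `S`; conversely, appending any block containing `M` to an ordered partition of the rest
keeps it ordered (`isAnti_append_iff`). A last block of size `a` thus amounts to a choice of `a - 1`
further elements among the `|S| - 1` elements other than `M`, and what remains is an ordered
partition of a set of size `|S| - a` with the remaining block sizes. This is the recursion
`nCoef_append` satisfied by the product of binomial coefficients.
-/

/-- A partition of `{1,…,j}`: an ordered tuple of pairwise disjoint nonempty
subsets of `{1,…,j}` whose union is `{1,…,j}`. -/
def IsPartitionOf (j : ℕ) (L : List (Finset ℕ)) : Prop :=
  (∀ A ∈ L, A.Nonempty) ∧ L.Pairwise Disjoint ∧ L.foldr (· ∪ ·) ∅ = Finset.Icc 1 j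

/-- Membership in `P₁⁺(j)`: a partition of `{1,…,j}` whose first block contains `1`. -/
def IsP1Plus (j : ℕ) (L : List (Finset ℕ)) : Prop :=
  IsPartitionOf j L ∧ 1 ∈ L.headI

/-- Membership in `P^a(j)`: a partition of `{1,…,j}` that is anti-lexicographically
ordered, i.e. `max λ₁ < max λ₂ < … < max λ_l`. -/
def IsPAnti (j : ℕ) (L : List (Finset ℕ)) : Prop :=
  IsPartitionOf j L ∧ (L.map fun A => A.sup id).Chain' (· < ·)

/-- `λ_{[s]}⁺` (for `1 ≤ s ≤ l`): adjoin `j+1` to the `s`-th block (1-indexed). -/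
def plusOp (j : ℕ) (L : List (Finset ℕ)) (s : ℕ) : List (Finset ℕ) :=
  L.set (s - 1) (insert (j + 1) (L.getD (s - 1) ∅))

/-- `λ_{[s]}⁻` (for `1 ≤ s ≤ l`): insert the new singleton block `{j+1}` right after
the `s`-th block (1-indexed). -/
def minusOp (j : ℕ) (L : List (Finset ℕ)) (s : ℕ) : List (Finset ℕ) :=
  L.take s ++ [{j + 1}] ++ L.drop s

/-- The coefficient `N(j_1,…,j_l) = ∏_{i=2}^{l} C(j_1+…+j_i − 1, j_i − 1)`,
for a composition given as the list `js = [j_1,…,j_l]`. -/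
def nCoef (js : List ℕ) : ℕ :=
  ∏ i ∈ Finset.Icc 2 js.length,
    Nat.choose ((js.take i).sum - 1) (js.getD (i - 1) 0 - 1)

/-- `L` is an anti-lexicographically ordered partition of the finite set `S`. The covering condition
is stated elementwise, and the ordering of the maxima as a pairwise condition. -/
def IsAnti (S : Finset ℕ) (L : List (Finset ℕ)) : Prop :=
  (∀ A ∈ L, A.Nonempty) ∧ L.Pairwise Disjoint ∧ (∀ x, x ∈ S ↔ ∃ A ∈ L, x ∈ A) ∧
    L.Pairwise fun A B => A.sup id < B.sup id

lemma mem_foldr_union (L : List (Finset ℕ)) (x : ℕ) :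
    x ∈ L.foldr (· ∪ ·) ∅ ↔ ∃ A ∈ L, x ∈ A := by
  induction L with
  | nil => simp
  | cons A L ih => simp [ih]

lemma isPAnti_iff (j : ℕ) (L : List (Finset ℕ)) :
    IsPAnti j L ↔ IsAnti (Finset.Icc 1 j) L := by
  have h : (L.map fun A => A.sup id).IsChain (· < ·) ↔
      L.Pairwise fun A B => A.sup id < B.sup id := by
    rw [List.isChain_iff_pairwise, List.pairwise_map]
  have h2 : L.foldr (· ∪ ·) ∅ = Finset.Icc 1 j ↔
      ∀ x, x ∈ Finset.Icc 1 j ↔ ∃ A ∈ L, x ∈ A := by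
    rw [Finset.ext_iff]
    simp only [mem_foldr_union]
    exact forall_congr' fun _ => Iff.comm
  unfold IsPAnti IsPartitionOf IsAnti
  rw [← h, ← h2]
  tauto

lemma sup_id_mem {A : Finset ℕ} (hA : A.Nonempty) : A.sup id ∈ A := by
  obtain ⟨i, hi, h⟩ := Finset.exists_mem_eq_sup A hA id
  rw [h]
  exact hi

/-- Splitting off the last block: it is an arbitrary subset containing the maximum. -/
lemma isAnti_append_iff {S : Finset ℕ} (hS : S.Nonempty) (L : List (Finset ℕ)) (B : Finset ℕ) :
    IsAnti S (L ++ [B]) ↔ S.sup id ∈ B ∧ B ⊆ S ∧ IsAnti (S \ B) L := by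
  have hM := sup_id_mem hS
  have hle : ∀ {A : Finset ℕ} {x}, x ∈ A → x ≤ A.sup id := fun h => Finset.le_sup (f := id) h
  unfold IsAnti
  simp only [List.pairwise_append, List.mem_append, List.mem_singleton, List.pairwise_singleton,
    or_imp, forall_and, forall_eq, true_and, Finset.mem_sdiff]
  constructor
  · rintro ⟨⟨h1, hB⟩, ⟨hd, hdB⟩, hc, hs, hsB⟩
    have hBS : B ⊆ S := fun x hx => (hc x).2 ⟨B, Or.inr rfl, hx⟩
    refine ⟨?_, hBS, h1, hd, fun x => ?_, hs⟩
    · obtain ⟨A, hA | rfl, hx⟩ := (hc _).1 hM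
      · have := hsB A hA
        have := hle hx
        have := hle (hBS (sup_id_mem hB))
        omega
      · exact hx
    · constructor
      · rintro ⟨hx, hxB⟩
        obtain ⟨A, hA | rfl, hx⟩ := (hc x).1 hx
        · exact ⟨A, hA, hx⟩
        · exact absurd hx hxB
      · rintro ⟨A, hA, hx⟩
        exact ⟨(hc x).2 ⟨A, Or.inl hA, hx⟩, Finset.disjoint_left.1 (hdB A hA) hx⟩
  · rintro ⟨hMB, hBS, h1, hd, hc, hs⟩
    refine ⟨⟨h1, ⟨_, hMB⟩⟩, ⟨hd, fun A hA => ?_⟩, fun x => ⟨fun hx => ?_, ?_⟩, hs, fun A hA => ?_⟩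
    · exact Finset.disjoint_left.2 fun x hx => ((hc x).2 ⟨A, hA, hx⟩).2
    · by_cases hxB : x ∈ B
      · exact ⟨B, Or.inr rfl, hxB⟩
      · obtain ⟨A, hA, hx⟩ := (hc x).1 ⟨hx, hxB⟩
        exact ⟨A, Or.inl hA, hx⟩
    · rintro ⟨A, hA | rfl, hx⟩
      · exact ((hc x).2 ⟨A, hA, hx⟩).1
      · exact hBS hx
    · have hm := (hc _).2 ⟨A, hA, sup_id_mem (h1 A hA)⟩
      have hne : A.sup id ≠ S.sup id := fun h => hm.2 (h ▸ hMB)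
      have := hle hm.1
      have := hle hMB
      omega

lemma nCoef_append (js : List ℕ) (a : ℕ) :
    nCoef (js ++ [a]) = (js.sum + a - 1).choose (a - 1) * nCoef js := by
  rcases Nat.eq_zero_or_pos js.length with h | h
  · obtain rfl := List.length_eq_zero_iff.1 h
    simp [nCoef]
  · unfold nCoef
    rw [List.length_append, List.length_singleton, Finset.prod_Icc_succ_top (by omega), mul_comm]
    congr 1
    · simp [List.take_of_length_le]
    · refine Finset.prod_congr rfl fun i hi => ?_
      rw [Finset.mem_Icc] at hi
      rw [List.take_append_of_le_length hi.2, List.getD_append _ _ _ _ (by omega)]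

/-- The count over an arbitrary ground set `S`, with the finiteness of the set of partitions being
part of the conclusion. -/
lemma exists_finset_isAnti (js : List ℕ) (hpos : ∀ a ∈ js, 1 ≤ a) :
    ∀ S : Finset ℕ, S.card = js.sum → ∃ T : Finset (List (Finset ℕ)),
      (∀ L, L ∈ T ↔ IsAnti S L ∧ L.map Finset.card = js) ∧ T.card = nCoef js := by
  induction js using List.reverseRecOn with
  | nil =>
    intro S hS
    obtain rfl : S = ∅ := by simpa using hS
    refine ⟨{[]}, fun L => ?_, by simp [nCoef]⟩
    simp only [Finset.mem_singleton, List.map_eq_nil_iff]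
    constructor
    · rintro rfl
      simp [IsAnti]
    · exact fun h => h.2
  | append_singleton js a ih =>
    intro S hS
    have ha : 1 ≤ a := hpos a (by simp)
    simp only [List.sum_append, List.sum_singleton] at hS
    choose! T hT hTc using ih fun b hb => hpos b (by simp [hb])
    have hne : S.Nonempty := Finset.card_pos.1 (by omega)
    have hM := sup_id_mem hne
    set M := S.sup id with hMdef
    -- the possible last blocks, parametrized by their elements other than the maximum `M`
    set P := (S.erase M).powersetCard (a - 1) with hP
    have hPmem : ∀ C ∈ P, M ∉ C ∧ insert M C ⊆ S ∧ (insert M C).card = a := by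
      intro C hC
      obtain ⟨h1, h2⟩ := Finset.mem_powersetCard.1 hC
      have hMC : M ∉ C := fun h => (Finset.mem_erase.1 (h1 h)).1 rfl
      refine ⟨hMC, Finset.insert_subset hM (h1.trans (Finset.erase_subset _ _)), ?_⟩
      rw [Finset.card_insert_of_notMem hMC]
      omega
    have hrest : ∀ B ⊆ S, B.card = a → (S \ B).card = js.sum := by
      intro B hB hc
      rw [Finset.card_sdiff_of_subset hB]
      omega
    refine ⟨P.biUnion fun C => (T (S \ insert M C)).image (· ++ [insert M C]), fun L => ?_, ?_⟩
    · simp only [Finset.mem_biUnion, Finset.mem_image]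
      constructor
      · rintro ⟨C, hC, L, hL, rfl⟩
        obtain ⟨-, h2, h3⟩ := hPmem C hC
        obtain ⟨h4, h5⟩ := (hT _ (hrest _ h2 h3) L).1 hL
        exact ⟨(isAnti_append_iff hne _ _).2 ⟨Finset.mem_insert_self _ _, h2, h4⟩, by simp [h5, h3]⟩
      · rintro ⟨hL, hmap⟩
        rcases List.eq_nil_or_concat' L with rfl | ⟨L, B, rfl⟩
        · simp at hmap
        · obtain ⟨h1, h2, h3⟩ := (isAnti_append_iff hne _ _).1 hL
          rw [List.map_append, List.map_singleton] at hmap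
          obtain ⟨h4, h5⟩ := List.append_inj' hmap rfl
          have h5 : B.card = a := by simpa using h5
          refine ⟨B.erase M, ?_, L, ?_, ?_⟩
          · rw [hP, Finset.mem_powersetCard, Finset.card_erase_of_mem h1, h5]
            exact ⟨Finset.erase_subset_erase _ h2, rfl⟩
          · rw [Finset.insert_erase h1]
            exact (hT _ (hrest _ h2 h5) L).2 ⟨h3, h4⟩
          · rw [Finset.insert_erase h1]
    · rw [Finset.card_biUnion, Finset.sum_congr rfl (g := fun _ => nCoef js), Finset.sum_const,
        hP, Finset.card_powersetCard, Finset.card_erase_of_mem hM, hS, nCoef_append, smul_eq_mul]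
      · intro C hC
        obtain ⟨-, h2, h3⟩ := hPmem C hC
        rw [Finset.card_image_of_injective _ (List.append_left_injective _)]
        exact hTc _ (hrest _ h2 h3)
      · intro C hC D hD hCD
        rw [Function.onFun, Finset.disjoint_left]
        intro L hL hL'
        obtain ⟨L₁, -, rfl⟩ := Finset.mem_image.1 hL
        obtain ⟨L₂, -, h⟩ := Finset.mem_image.1 hL'
        have h : insert M D = insert M C := by simpa using (List.append_inj' h rfl).2
        apply hCD
        rw [← Finset.erase_insert (hPmem C hC).1, ← h, Finset.erase_insert (hPmem D hD).1]

/-- for positive integers `j_1+…+j_l = j` (with `1 ≤ l ≤ j`), the number of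
anti-lexicographically ordered partitions `λ ∈ P^a(j)` with `|λ_i| = j_i` for all `i`
equals `N(j_1,…,j_l) = ∏_{i=2}^{l} C(j_1+…+j_i − 1, j_i − 1)`. -/
theorem card_pAnti_with_block_sizes (j l : ℕ) (hj : 1 ≤ j) (hl : 1 ≤ l) (hlj : l ≤ j)
    (js : List ℕ) (hlen : js.length = l) (hpos : ∀ a ∈ js, 1 ≤ a) (hsum : js.sum = j) :
    {L : List (Finset ℕ) | IsPAnti j L ∧ L.map Finset.card = js}.ncard = nCoef js := by
  obtain ⟨T, hT, hc⟩ := exists_finset_isAnti js hpos (Finset.Icc 1 j) (by simp [hsum])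
  rw [← hc, ← Set.ncard_coe_finset]
  congr 1
  ext L
  simp [hT, isPAnti_iff]
end

section
/- Let g : ℝⁿ → M_N(ℝ) be smooth with g(x) invertible for every x. Let k ≥ 2, let (μ_1,…,μ_k) ∈ {1,…,n}^k, and let λ = (λ_1,…,λ_l) ∈ P₁⁺(k−1). Then, pointwise on ℝⁿ, ∂_{μ_k} ξ_{λ(μ_1…μ_{k−1})} = Σ_{s=1}^{l} ( ξ_{λ_{[s]}⁺(μ_1…μ_k)} − ξ_{λ_{[s]}⁻(μ_1…μ_k)} ). -/
/-!
Differentiating `g g⁻¹ = 1` gives `∂_ν g⁻¹ = -g⁻¹ (∂_ν g) g⁻¹` (`pd_inv`), so the Leibniz rule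
yields, for a single block, `∂_ν ξ_T = (∂_ν ∂_T g) g⁻¹ - ξ_T ξ_ν` (`pd_xiTup`). Since `g` is
smooth, partial derivatives commute (`pd_comm`) and the first term is `ξ_{Tν}`: the new index,
being larger than all the others, is the last entry of the enlarged block (`tupleOf_insert`).
The two terms are exactly the effect of `λ ↦ λ_{[s]}⁺` and `λ ↦ λ_{[s]}⁻` on the `s`-th factor,
and the Leibniz rule applied to the product of the factors, by induction on the number of blocks,
gives the sum (`pd_xiPart_aux`).
-/

/-- The partial derivative in the `μ`-th coordinate direction of a matrix-valued map on
`ℝⁿ`, taken entrywise. -/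
noncomputable def pd {n N : ℕ} (μ : Fin n) (f : (Fin n → ℝ) → Matrix (Fin N) (Fin N) ℝ) :
    (Fin n → ℝ) → Matrix (Fin N) (Fin N) ℝ :=
  fun x => Matrix.of fun a b => fderiv ℝ (fun y => f y a b) x (Pi.single μ 1)

/-- A matrix-valued map on `ℝⁿ` is smooth iff each entry is `C^∞`. -/
def MSmooth {n N : ℕ} (f : (Fin n → ℝ) → Matrix (Fin N) (Fin N) ℝ) : Prop :=
  ∀ a b, ContDiff ℝ (⊤ : ℕ∞) fun y => f y a b

/-- Iterated partial derivative `∂_{μ_1}⋯∂_{μ_j} f` for a tuple `[μ_1,…,μ_j]`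
(`∂_{μ_j}` acts first, `∂_{μ_1}` last). -/
noncomputable def iterPD {n N : ℕ} :
    List (Fin n) → ((Fin n → ℝ) → Matrix (Fin N) (Fin N) ℝ) →
      ((Fin n → ℝ) → Matrix (Fin N) (Fin N) ℝ)
  | [], f => f
  | μ :: rest, f => pd μ (iterPD rest f)

/-- `ξ_{μ_1…μ_j}(x) = (∂_{μ_1}⋯∂_{μ_j} g)(x) · g(x)⁻¹`. -/
noncomputable def xiTup {n N : ℕ} (g : (Fin n → ℝ) → Matrix (Fin N) (Fin N) ℝ)
    (μs : List (Fin n)) : (Fin n → ℝ) → Matrix (Fin N) (Fin N) ℝ :=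
  fun x => iterPD μs g x * (g x)⁻¹

/-- The trivialized jet components, prepend convention: `ξ^{(1)}_μ = (∂_μ g)·g⁻¹` and
`ξ^{(j)}_{μ_1…μ_j} = ∂_{μ_1}(ξ^{(j−1)}_{μ_2…μ_j})` (the new differentiation index is
prepended, i.e. the head of the list is the outermost derivative). -/
noncomputable def xiJ {n N : ℕ} (g : (Fin n → ℝ) → Matrix (Fin N) (Fin N) ℝ) :
    List (Fin n) → (Fin n → ℝ) → Matrix (Fin N) (Fin N) ℝ
  | [] => fun _ => 1
  | [μ] => fun x => pd μ g x * (g x)⁻¹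
  | μ :: rest => pd μ (xiJ g rest)

/-- The ordered tuple `(μ_a)_{a ∈ κ}` with `κ` sorted increasingly. -/
def tupleOf {n : ℕ} (μ : ℕ → Fin n) (κ : Finset ℕ) : List (Fin n) :=
  (κ.sort (· ≤ ·)).map μ

/-- `ξ_{λ(μ_1…μ_j)} = ξ_{λ_1(μ_1…μ_j)} ⋯ ξ_{λ_l(μ_1…μ_j)}` (ordered matrix product). -/
noncomputable def xiPart {n N : ℕ} (g : (Fin n → ℝ) → Matrix (Fin N) (Fin N) ℝ)
    (μ : ℕ → Fin n) (L : List (Finset ℕ)) (x : Fin n → ℝ) : Matrix (Fin N) (Fin N) ℝ :=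
  (L.map fun A => xiTup g (tupleOf μ A) x).prod

/-- The matrix commutator `[A,B] = AB − BA`. -/
def mcomm {N : ℕ} (A B : Matrix (Fin N) (Fin N) ℝ) : Matrix (Fin N) (Fin N) ℝ :=
  A * B - B * A

section PartialDerivatives

variable {n N : ℕ} {f h g : (Fin n → ℝ) → Matrix (Fin N) (Fin N) ℝ}

lemma MSmooth.differentiableAt (hf : MSmooth f) (a b : Fin N) (x : Fin n → ℝ) :
    DifferentiableAt ℝ (fun y => f y a b) x :=
  ((hf a b).differentiable (by simp)).differentiableAt

lemma MSmooth.pd (hf : MSmooth f) (ν : Fin n) : MSmooth (pd ν f) := by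
  intro a b
  have h1 : ContDiff ℝ (⊤ : ℕ∞) (fderiv ℝ fun y => f y a b) :=
    (hf a b).fderiv_right (by simp)
  exact h1.clm_apply contDiff_const

lemma MSmooth.iterPD (hf : MSmooth f) : ∀ T : List (Fin n), MSmooth (iterPD T f)
  | [] => hf
  | ν :: T => (MSmooth.iterPD hf T).pd ν

lemma MSmooth.mul (hf : MSmooth f) (hh : MSmooth h) : MSmooth fun x => f x * h x := by
  intro a b
  simp only [Matrix.mul_apply]
  exact ContDiff.sum fun c _ => (hf a c).mul (hh c b)

lemma MSmooth.det (hf : MSmooth f) : ContDiff ℝ (⊤ : ℕ∞) fun x => (f x).det := by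
  simp only [Matrix.det_apply]
  exact ContDiff.sum fun σ _ => (contDiff_prod fun i _ => hf _ _).const_smul _

/-- By Cramer's rule the entries of `g⁻¹` are quotients of polynomials in the entries of `g`. -/
lemma MSmooth.inv (hg : MSmooth g) (hinv : ∀ x, IsUnit (g x)) : MSmooth fun x => (g x)⁻¹ := by
  intro a b
  have hadj : ContDiff ℝ (⊤ : ℕ∞) fun x => (g x).adjugate a b := by
    simp only [Matrix.adjugate_apply]
    refine MSmooth.det (f := fun x => (g x).updateRow b (Pi.single a 1)) fun c d => ?_
    by_cases hc : c = b
    · subst hc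
      simp only [Matrix.updateRow_self]
      exact contDiff_const
    · simp only [Matrix.updateRow_ne hc]
      exact hg c d
  have hdet : ContDiff ℝ (⊤ : ℕ∞) fun x => ((g x).det)⁻¹ :=
    hg.det.inv fun x => ((Matrix.isUnit_iff_isUnit_det _).1 (hinv x)).ne_zero
  simp only [Matrix.inv_def, Ring.inverse_eq_inv', Matrix.smul_apply, smul_eq_mul]
  exact hdet.mul hadj

lemma pd_const (ν : Fin n) (A : Matrix (Fin N) (Fin N) ℝ) (x : Fin n → ℝ) :
    pd ν (fun _ => A) x = 0 := by
  ext a b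
  simp [pd]

/-- The Leibniz rule. -/
lemma pd_mul (hf : MSmooth f) (hh : MSmooth h) (ν : Fin n) (x : Fin n → ℝ) :
    pd ν (fun y => f y * h y) x = pd ν f x * h x + f x * pd ν h x := by
  ext a b
  simp only [pd, Matrix.mul_apply, Matrix.of_apply, Matrix.add_apply]
  rw [fderiv_fun_sum (A := fun c y => f y a c * h y c b)
    fun c _ => (hf.differentiableAt a c x).mul (hh.differentiableAt c b x)]
  simp only [ContinuousLinearMap.sum_apply]
  rw [← Finset.sum_add_distrib]
  refine Finset.sum_congr rfl fun c _ => ?_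
  rw [fderiv_fun_mul (hf.differentiableAt a c x) (hh.differentiableAt c b x)]
  simp only [ContinuousLinearMap.add_apply, ContinuousLinearMap.smul_apply, smul_eq_mul]
  ring

lemma pd_inv (hg : MSmooth g) (hinv : ∀ x, IsUnit (g x)) (ν : Fin n) (x : Fin n → ℝ) :
    pd ν (fun y => (g y)⁻¹) x = -((g x)⁻¹ * (pd ν g x * (g x)⁻¹)) := by
  have hu : ∀ y, IsUnit (g y).det := fun y => (Matrix.isUnit_iff_isUnit_det _).1 (hinv y)
  have h1 := pd_mul hg (hg.inv hinv) ν x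
  simp only [Matrix.mul_nonsing_inv _ (hu _), pd_const] at h1
  have h2 : g x * pd ν (fun y => (g y)⁻¹) x = -(pd ν g x * (g x)⁻¹) :=
    eq_neg_of_add_eq_zero_right h1.symm
  rw [← mul_neg, ← h2, Matrix.nonsing_inv_mul_cancel_left _ _ (hu x)]

lemma pd_comm (hf : MSmooth f) (ν ρ : Fin n) : pd ν (pd ρ f) = pd ρ (pd ν f) := by
  funext x
  ext a b
  have hd : DifferentiableAt ℝ (fderiv ℝ fun y => f y a b) x :=
    (((hf a b).fderiv_right (m := (⊤ : ℕ∞)) (by simp)).differentiable (by simp)).differentiableAt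
  have key : ∀ v w : Fin n → ℝ,
      fderiv ℝ (fun y => fderiv ℝ (fun z => f z a b) y v) x w
        = fderiv ℝ (fderiv ℝ fun z => f z a b) x w v := by
    intro v w
    rw [fderiv_clm_apply hd (differentiableAt_const v)]
    simp
  have hs : IsSymmSndFDerivAt ℝ (fun y => f y a b) x :=
    (hf a b).contDiffAt.isSymmSndFDerivAt (by
      rw [minSmoothness_of_isRCLikeNormedField]
      exact WithTop.coe_le_coe.2 le_top)
  simp only [pd, Matrix.of_apply, key]
  exact hs.eq _ _

/-- Partial derivatives commute, so a new one may be applied outermost or innermost. -/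
lemma iterPD_append_singleton (hf : MSmooth f) (ν : Fin n) :
    ∀ T : List (Fin n), iterPD (T ++ [ν]) f = pd ν (iterPD T f)
  | [] => rfl
  | ρ :: T => by
    rw [List.cons_append, iterPD, iterPD_append_singleton hf ν T, iterPD,
      pd_comm (hf.iterPD T)]

/-- The case of a single block: `∂_ν ξ_T = ξ_{Tν} - ξ_T ξ_ν`. -/
lemma pd_xiTup (hg : MSmooth g) (hinv : ∀ x, IsUnit (g x)) (ν : Fin n) (T : List (Fin n))
    (x : Fin n → ℝ) :
    pd ν (xiTup g T) x = xiTup g (T ++ [ν]) x - xiTup g T x * xiTup g [ν] x := by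
  have h1 := pd_mul (hg.iterPD T) (hg.inv hinv) ν x
  rw [pd_inv hg hinv] at h1
  simp only [xiTup, iterPD_append_singleton hg, iterPD]
  exact h1.trans (by noncomm_ring)

end PartialDerivatives

section Partitions

variable {n N : ℕ} {g : (Fin n → ℝ) → Matrix (Fin N) (Fin N) ℝ}

lemma MSmooth.xiTup (hg : MSmooth g) (hinv : ∀ x, IsUnit (g x)) (T : List (Fin n)) :
    MSmooth (xiTup g T) :=
  (hg.iterPD T).mul (hg.inv hinv)

lemma xiPart_cons (μ : ℕ → Fin n) (A : Finset ℕ) (L : List (Finset ℕ)) (x : Fin n → ℝ) :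
    xiPart g μ (A :: L) x = xiTup g (tupleOf μ A) x * xiPart g μ L x := by
  simp [xiPart]

lemma MSmooth.xiPart (hg : MSmooth g) (hinv : ∀ x, IsUnit (g x)) (μ : ℕ → Fin n) :
    ∀ L : List (Finset ℕ), MSmooth (xiPart g μ L)
  | [] => fun _ _ => contDiff_const
  | A :: L => by
    have h := (hg.xiTup hinv (tupleOf μ A)).mul (MSmooth.xiPart hg hinv μ L)
    simpa only [← xiPart_cons] using h

/-- An index larger than all elements of `A` comes last in the tuple of `insert k A`. -/
lemma tupleOf_insert (μ : ℕ → Fin n) {A : Finset ℕ} {k : ℕ} (hA : ∀ a ∈ A, a < k) :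
    tupleOf μ (insert k A) = tupleOf μ A ++ [μ k] := by
  have hk : k ∉ A := fun h => lt_irrefl _ (hA k h)
  have h : (insert k A).sort (· ≤ ·) = A.sort (· ≤ ·) ++ [k] := by
    refine List.Perm.eq_of_pairwise' (r := (· ≤ ·)) (Finset.pairwise_sort _ _) ?_ ?_
    · refine List.pairwise_append.2 ⟨Finset.pairwise_sort _ _, List.pairwise_singleton _ _, ?_⟩
      intro a ha b hb
      rw [List.mem_singleton.1 hb]
      exact (hA a ((Finset.mem_sort _).1 ha)).le
    · refine (List.perm_ext_iff_of_nodup (Finset.sort_nodup _ _) ?_).2 fun a => ?_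
      · refine List.nodup_append.2 ⟨Finset.sort_nodup _ _, List.nodup_singleton _, ?_⟩
        intro a ha b hb
        rw [List.mem_singleton.1 hb]
        exact (hA a ((Finset.mem_sort _).1 ha)).ne
      · simp [or_comm]
  simp [tupleOf, h]

/-- The formula for an arbitrary list of blocks whose elements are all smaller than the new
index `k`, with block positions counted from `0`. -/
lemma pd_xiPart_aux (hg : MSmooth g) (hinv : ∀ x, IsUnit (g x)) (μ : ℕ → Fin n) (k : ℕ)
    (x : Fin n → ℝ) :
    ∀ L : List (Finset ℕ), (∀ A ∈ L, ∀ a ∈ A, a < k) →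
      pd (μ k) (xiPart g μ L) x
        = ∑ s ∈ Finset.range L.length,
            (xiPart g μ (L.set s (insert k (L.getD s ∅))) x
              - xiPart g μ (L.take (s + 1) ++ [{k}] ++ L.drop (s + 1)) x)
  | [], _ => by
    exact pd_const (μ k) (1 : Matrix (Fin N) (Fin N) ℝ) x
  | A :: L, h => by
    have ih := pd_xiPart_aux hg hinv μ k x L fun B hB => h B (List.mem_cons_of_mem _ hB)
    have h1 := pd_mul (hg.xiTup hinv (tupleOf μ A)) (hg.xiPart hinv μ L) (μ k) x
    have hs : tupleOf μ {k} = [μ k] := by simp [tupleOf]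
    simp only [← xiPart_cons] at h1
    refine h1.trans ?_
    rw [List.length_cons, Finset.sum_range_succ', ih, Finset.mul_sum, add_comm]
    congr 1
    · refine Finset.sum_congr rfl fun s _ => ?_
      simp [xiPart_cons, mul_sub]
    · rw [pd_xiTup hg hinv]
      simp [xiPart_cons, tupleOf_insert μ (h A List.mem_cons_self), hs, sub_mul, mul_assoc]

lemma IsPartitionOf.mem_le {j : ℕ} {L : List (Finset ℕ)} (hL : IsPartitionOf j L) :
    ∀ A ∈ L, ∀ a ∈ A, a ≤ j := by
  have hsub : ∀ L : List (Finset ℕ), ∀ A ∈ L, A ⊆ L.foldr (· ∪ ·) ∅ := by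
    intro L
    induction L with
    | nil => simp
    | cons B L ih =>
      intro A hA
      rcases List.mem_cons.1 hA with rfl | hA
      · exact Finset.subset_union_left
      · exact (ih A hA).trans Finset.subset_union_right
  intro A hA a ha
  have := hsub L A hA ha
  rw [hL.2.2, Finset.mem_Icc] at this
  exact this.2

end Partitions

/-- for smooth `g : ℝⁿ → M_N(ℝ)` with `g(x)` invertible everywhere, `k ≥ 2`,
a tuple `(μ_1,…,μ_k)` (given by `μ : ℕ → Fin n` on indices `1,…,k`) and
`λ = (λ_1,…,λ_l) ∈ P₁⁺(k−1)`, pointwise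
`∂_{μ_k} ξ_{λ(μ_1…μ_{k−1})} = Σ_{s=1}^{l} (ξ_{λ_{[s]}⁺(μ_1…μ_k)} − ξ_{λ_{[s]}⁻(μ_1…μ_k)})`. -/
theorem pd_xiPart (n N k : ℕ) (hn : 1 ≤ n) (hN : 1 ≤ N) (hk : 2 ≤ k)
    (g : (Fin n → ℝ) → Matrix (Fin N) (Fin N) ℝ)
    (hg : MSmooth g) (hinv : ∀ x, IsUnit (g x))
    (μ : ℕ → Fin n) (L : List (Finset ℕ)) (hL : IsP1Plus (k - 1) L) (x : Fin n → ℝ) :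
    pd (μ k) (xiPart g μ L) x
      = ∑ s ∈ Finset.Icc 1 L.length,
          (xiPart g μ (plusOp (k - 1) L s) x - xiPart g μ (minusOp (k - 1) L s) x) := by
  obtain ⟨j, rfl⟩ : ∃ j, k = j + 1 := ⟨k - 1, by omega⟩
  rw [pd_xiPart_aux hg hinv μ (j + 1) x L
      fun A hA a ha => Nat.lt_succ_of_le (hL.1.mem_le A hA a ha),
    Finset.range_eq_Ico, ← Finset.Ico_add_one_right_eq_Icc]
  -- the positions `1, …, l` are the positions `0, …, l - 1` shifted by one
  have hshift := Finset.sum_Ico_add' (fun s => xiPart g μ (plusOp j L s) x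
    - xiPart g μ (minusOp j L s) x) 0 L.length 1
  simpa [plusOp, minusOp] using hshift
end

section
/- Let N and k be positive integers. For every invertible matrix g₀ ∈ M_N(ℝ) and every tuple of matrices v_1,…,v_k ∈ M_N(ℝ), there exists a smooth curve c : ℝ → M_N(ℝ) with c(t) invertible for every t, such that c(0) = g₀ and ξ^{(j)}(0) = v_j for every 1 ≤ j ≤ k, where ξ^{(1)}(t) = c′(t)·c(t)⁻¹ and ξ^{(j)} = (ξ^{(j−1)})′ for j ≥ 2. (This expresses the surjectivity of the trivialization J₀^k(ℝ,G) ≅ G × (𝔤 ⊕ … ⊕ 𝔤) for the matrix group G = GL(N,ℝ).) -/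
/-!
Prescribing `ξ^{(1)}, …, ξ^{(k)}` at `0` amounts to prescribing the `(k-1)`-jet at `0` of
`ξ^{(1)} = c' c⁻¹`. Let `V t = ∑ (t^i / i!) v_{i+1}` be the polynomial with the desired jet. The
linear equation `c' = V c`, `c 0 = g₀` has a smooth solution on some interval around `0` by
Picard–Lindelöf, and it is invertible near `0` because units are open (`exists_local_solution`).
Precomposing with a smooth map `φ : ℝ → ℝ` that is the identity near `0` and takes values in this
interval (`exists_smooth_truncation`) yields a globally defined smooth invertible curve whose germ
at `0` is unchanged (`exists_global_curve`). Near `0` it satisfies `ξ^{(1)} = V` exactly, so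
`ξ^{(j)}` is the `(j-1)`-st derivative of `V`, whose value at `0` is `v_j`.
-/

/-- The componentwise derivative of a curve of matrices. -/
noncomputable def mderiv {N : ℕ} (c : ℝ → Matrix (Fin N) (Fin N) ℝ) :
    ℝ → Matrix (Fin N) (Fin N) ℝ :=
  fun t => Matrix.of fun a b => deriv (fun s => c s a b) t

/-- The trivialized components of a curve: `ξ^{(1)}(t) = c′(t)·c(t)⁻¹` and
`ξ^{(j)} = (ξ^{(j−1)})′` for `j ≥ 2`. (The value at `0` is a junk value.) -/
noncomputable def xiC {N : ℕ} (c : ℝ → Matrix (Fin N) (Fin N) ℝ) :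
    ℕ → ℝ → Matrix (Fin N) (Fin N) ℝ
  | 0 => c
  | 1 => fun t => mderiv c t * (c t)⁻¹
  | (j + 2) => mderiv (xiC c (j + 1))

section NormedAlgebra

variable {A : Type*} [NormedRing A] [NormedAlgebra ℝ A] [CompleteSpace A]

lemma exists_local_solution (V : ℝ → A) (hV : ContDiff ℝ (⊤ : ℕ∞) V) (g : A) (hg : IsUnit g) :
    ∃ δ > 0, ∃ c : ℝ → A, c 0 = g ∧ ContDiffOn ℝ (⊤ : ℕ∞) c (Set.Icc (-δ) δ) ∧
      (∀ t ∈ Set.Icc (-δ) δ, IsUnit (c t)) ∧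
      ∀ t ∈ Set.Ioo (-δ) δ, HasDerivAt c (V t * c t) t := by
  obtain ⟨C₀, hC₀⟩ := (isCompact_Icc (a := (-1 : ℝ)) (b := 1)).exists_bound_of_continuousOn
    hV.continuous.continuousOn
  obtain ⟨C, hC⟩ : ∃ C : NNReal, ∀ t ∈ Set.Icc (-1 : ℝ) 1, ‖V t‖ ≤ C :=
    ⟨C₀.toNNReal, fun t ht => (hC₀ t ht).trans (Real.le_coe_toNNReal _)⟩
  -- a bound for `‖V t * x‖` over `|t| ≤ 1` and `‖x - g‖ ≤ 1`
  set L : NNReal := C * (‖g‖₊ + 1) with hL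
  set ε : ℝ := 1 / (L + 1) with hε
  have hL0 : (0 : ℝ) ≤ L := L.2
  have hε0 : 0 < ε := by positivity
  have hε1 : ε ≤ 1 := by
    rw [hε, div_le_one (by positivity)]; linarith
  have hLε : L * ε ≤ 1 := by
    rw [hε, mul_one_div, div_le_one (by positivity)]; linarith
  have hsub : ∀ t ∈ Set.Icc (-ε) ε, ‖V t‖ ≤ C := fun t ht =>
    hC t ⟨by linarith [ht.1], by linarith [ht.2]⟩
  have hPL : IsPicardLindelof (fun t x => V t * x) (tmin := -ε) (tmax := ε)
      ⟨0, by simp [hε0.le]⟩ g 1 0 L C := by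
    refine ⟨fun t ht => ?_, fun x _ => ?_, fun t ht x hx => ?_, ?_⟩
    · refine LipschitzWith.lipschitzOnWith (LipschitzWith.of_dist_le_mul fun x y => ?_)
      rw [dist_eq_norm, dist_eq_norm, ← mul_sub]
      exact (norm_mul_le _ _).trans (by gcongr; exact hsub t ht)
    · exact (hV.continuous.mul continuous_const).continuousOn
    · have hx' : ‖x‖ ≤ ‖g‖ + 1 := by
        rw [mem_closedBall_iff_norm] at hx
        have := norm_le_norm_add_norm_sub' x g
        simp only [NNReal.coe_one] at hx
        linarith
      refine (norm_mul_le _ _).trans ?_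
      rw [hL]
      push_cast
      gcongr
      exact hsub t ht
    · simpa using hLε
  obtain ⟨c, hc0, hc⟩ := hPL.exists_eq_forall_mem_Icc_hasDerivWithinAt₀
  simp only at hc0
  have hsm : ContDiffOn ℝ (⊤ : ℕ∞) c (Set.Icc (-ε) ε) := by
    refine ODE.contDiffOn_enat_Icc_of_hasDerivWithinAt (f := fun t x => V t * x)
      (u := Set.univ) ?_ hc (fun _ _ => Set.mem_univ _)
    exact ((hV.comp contDiff_fst).mul contDiff_snd).contDiffOn
  have hcont : ContinuousAt c 0 :=
    hsm.continuousOn.continuousAt (Icc_mem_nhds (by linarith) hε0)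
  have hunit : ∀ᶠ t in nhds (0 : ℝ), IsUnit (c t) :=
    hcont.eventually (by
      rw [hc0]
      exact Units.isOpen.mem_nhds hg)
  obtain ⟨η, hη0, hη⟩ := Metric.eventually_nhds_iff.mp hunit
  refine ⟨min ε (η / 2), by positivity, c, hc0, hsm.mono ?_, fun t ht => hη ?_, fun t ht => ?_⟩
  · exact Set.Icc_subset_Icc (neg_le_neg (min_le_left _ _)) (min_le_left _ _)
  · have := min_le_right ε (η / 2)
    rw [Real.dist_eq, sub_zero, abs_lt]
    constructor <;> linarith [ht.1, ht.2]
  · have := min_le_left ε (η / 2)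
    have h1 : -ε < t := by linarith [ht.1]
    have h2 : t < ε := by linarith [ht.2]
    exact (hc t ⟨h1.le, h2.le⟩).hasDerivAt (Icc_mem_nhds h1 h2)

lemma exists_smooth_truncation (δ : ℝ) (hδ : 0 < δ) :
    ∃ φ : ℝ → ℝ, ContDiff ℝ (⊤ : ℕ∞) φ ∧ (∀ t, φ t ∈ Set.Icc (-δ) δ) ∧
      ∀ᶠ t in nhds 0, φ t = t := by
  let f : ContDiffBump (0 : ℝ) := ⟨δ / 2, δ, by positivity, by linarith⟩
  refine ⟨fun t => f t * t, f.contDiff.mul contDiff_id, fun t => ?_, ?_⟩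
  · rw [Set.mem_Icc, ← abs_le, abs_mul, abs_of_nonneg f.nonneg]
    by_cases ht : δ ≤ |t|
    · have : f t = 0 := f.zero_of_le_dist (by simpa [f] using ht)
      simp [this, hδ.le]
    · have h1 : f t ≤ 1 := f.le_one
      have h0 : 0 ≤ f t := f.nonneg
      nlinarith [abs_nonneg t]
  · filter_upwards [f.eventuallyEq_one] with t ht
    simp [ht]

lemma exists_global_curve (V : ℝ → A) (hV : ContDiff ℝ (⊤ : ℕ∞) V) (g : A) (hg : IsUnit g) :
    ∃ c : ℝ → A, ContDiff ℝ (⊤ : ℕ∞) c ∧ (∀ t, IsUnit (c t)) ∧ c 0 = g ∧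
      ∀ᶠ t in nhds 0, HasDerivAt c (V t * c t) t := by
  obtain ⟨δ, hδ, c, hc0, hsm, hu, hd⟩ := exists_local_solution V hV g hg
  obtain ⟨φ, hφ, hmem, hid⟩ := exists_smooth_truncation δ hδ
  refine ⟨c ∘ φ, hsm.comp_contDiff hφ hmem, fun t => hu _ (hmem t), ?_, ?_⟩
  · simp [hid.self_of_nhds, hc0]
  · filter_upwards [hid.eventually_nhds, Ioo_mem_nhds (neg_lt_zero.mpr hδ) hδ] with t ht htδ
    have heq : c ∘ φ =ᶠ[nhds t] c := ht.mono fun s hs => by simp [hs]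
    rw [heq.eq_of_nhds]
    exact (hd t htδ).congr_of_eventuallyEq heq

end NormedAlgebra

section Matrix

open scoped Matrix.Norms.Operator

/-- Evaluation of an entry of a matrix, as a continuous linear functional. -/
noncomputable def entryCLM {N : ℕ} (a b : Fin N) : Matrix (Fin N) (Fin N) ℝ →L[ℝ] ℝ :=
  LinearMap.toContinuousLinearMap (Matrix.entryLinearMap ℝ ℝ a b)

/-- The application of `exists_global_curve` to matrices, with the conclusions read off entrywise
so that they do not involve the choice of a matrix norm. -/
lemma exists_matrix_curve {N k : ℕ} (w : Fin k → Matrix (Fin N) (Fin N) ℝ)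
    (g : Matrix (Fin N) (Fin N) ℝ) (hg : IsUnit g) :
    ∃ c : ℝ → Matrix (Fin N) (Fin N) ℝ,
      (∀ a b, ContDiff ℝ (⊤ : ℕ∞) fun t => c t a b) ∧ (∀ t, IsUnit (c t)) ∧ c 0 = g ∧
      ∀ᶠ t in nhds 0, mderiv c t = (∑ i : Fin k, t ^ i.val • w i) * c t := by
  obtain ⟨c, hsm, hu, h0, hd⟩ := exists_global_curve
    (fun t : ℝ => ∑ i : Fin k, t ^ i.val • w i) (by fun_prop) g hg
  refine ⟨c, fun a b => (entryCLM a b).contDiff.comp hsm, hu, h0, ?_⟩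
  filter_upwards [hd] with t ht
  ext a b
  exact ((entryCLM a b).hasFDerivAt.comp_hasDerivAt t ht).deriv

end Matrix

open Polynomial in
/-- If `ξ^{(1)}` coincides near `0` with a matrix of polynomials, then `ξ^{(j+1)}` coincides near
`0` with the `j`-th derivatives of these polynomials. -/
lemma xiC_eventually_eq {N : ℕ} (c : ℝ → Matrix (Fin N) (Fin N) ℝ)
    (P : Fin N → Fin N → Polynomial ℝ)
    (h : ∀ᶠ t in nhds 0, mderiv c t * (c t)⁻¹ = Matrix.of fun a b => (P a b).eval t) (j : ℕ) :
    ∀ᶠ t in nhds 0, xiC c (j + 1) t =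
      Matrix.of fun a b => (derivative^[j] (P a b)).eval t := by
  induction j with
  | zero => exact h
  | succ j ih =>
    filter_upwards [ih.eventually_nhds] with t ht
    ext a b
    have heq : (fun s => xiC c (j + 1) s a b) =ᶠ[nhds t]
        fun s => (derivative^[j] (P a b)).eval s := ht.mono fun s hs => by simp [hs]
    change deriv (fun s => xiC c (j + 1) s a b) t = _
    rw [heq.deriv_eq, Polynomial.deriv, Matrix.of_apply, Function.iterate_succ_apply']

/-- surjectivity of the trivialization `J₀^k(ℝ, GL(N,ℝ)) ≅ GL(N,ℝ) × k𝔤`: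
for every invertible `g₀ ∈ M_N(ℝ)` and matrices `v_1,…,v_k`, there is a smooth curve
`c : ℝ → M_N(ℝ)`, invertible at every time, with `c(0) = g₀` and `ξ^{(j)}(0) = v_j` for
all `1 ≤ j ≤ k`. -/
theorem curve_jet_surjective (N k : ℕ) (hN : 1 ≤ N) (hk : 1 ≤ k)
    (g₀ : Matrix (Fin N) (Fin N) ℝ) (hg₀ : IsUnit g₀)
    (v : Fin k → Matrix (Fin N) (Fin N) ℝ) :
    ∃ c : ℝ → Matrix (Fin N) (Fin N) ℝ,
      (∀ a b, ContDiff ℝ (⊤ : ℕ∞) fun t => c t a b) ∧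
      (∀ t, IsUnit (c t)) ∧
      c 0 = g₀ ∧
      ∀ j : Fin k, xiC c (j.val + 1) 0 = v j := by
  obtain ⟨c, hsm, hu, h0, hd⟩ :=
    exists_matrix_curve (fun i : Fin k => ((i.val.factorial : ℝ)⁻¹) • v i) g₀ hg₀
  refine ⟨c, hsm, hu, h0, fun j => ?_⟩
  let P : Fin N → Fin N → Polynomial ℝ := fun a b =>
    ∑ i : Fin k, Polynomial.monomial i.val ((i.val.factorial : ℝ)⁻¹ * v i a b)
  have hP : ∀ᶠ t in nhds 0, mderiv c t * (c t)⁻¹ = Matrix.of fun a b => (P a b).eval t := by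
    filter_upwards [hd] with t ht
    rw [ht, Matrix.mul_nonsing_inv_cancel_right _ _ ((Matrix.isUnit_iff_isUnit_det _).mp (hu t))]
    ext a b
    simp [P, Matrix.sum_apply, Polynomial.eval_finsetSum, mul_comm]
  rw [(xiC_eventually_eq c P hP j).self_of_nhds]
  ext a b
  rw [Matrix.of_apply, ← Polynomial.coeff_zero_eq_eval_zero,
    Polynomial.coeff_iterate_derivative, zero_add, Nat.descFactorial_self]
  have hcoeff : (P a b).coeff j = (j.val.factorial : ℝ)⁻¹ * v j a b := by
    simp [P, Polynomial.coeff_monomial, Fin.val_inj]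
  rw [hcoeff, nsmul_eq_mul, mul_inv_cancel_left₀ (by positivity)]
end

section
/- Let g : ℝⁿ → M_N(ℝ) be smooth with g(x) invertible for every x, let ξ^{(j)} be its trivialized components, and let ω^{(j)} be the trivialized components of the pointwise inverse ḡ(x) = g(x)⁻¹. Then for every j ≥ 1 and every tuple (μ_1,…,μ_j) ∈ {1,…,n}^j, pointwise on ℝⁿ: ω^{(j)}_{μ_1…μ_j} = Σ_{λ ∈ P^a(j)} (−1)^{l} · g⁻¹ [ξ^{(j_1)}_{λ_1}, [ξ^{(j_2)}_{λ_2}, … , [ξ^{(j_{l−1})}_{λ_{l−1}}, ξ^{(j_l)}_{λ_l}] … ]] g, where l = length(λ), j_i = |λ_i|, and for l = 1 the bracketed expression is just ξ^{(j)}_{μ_1…μ_j}. (This is the coordinate, matrix-group form of the inverse-element formula of the Lie groupoid J^k(X,G) under the trivialization.) -/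
/-- `ξ^{(|A|)}` evaluated on the subtuple of `(μ_a)` indexed by the block `A` (sorted
increasingly), with the head-outermost (prepend) convention for `xiJ`. -/
noncomputable def xiBlock {n N : ℕ} (g : (Fin n → ℝ) → Matrix (Fin N) (Fin N) ℝ)
    (μ : ℕ → Fin n) (A : Finset ℕ) : (Fin n → ℝ) → Matrix (Fin N) (Fin N) ℝ :=
  xiJ g (tupleOf μ A)

/-- The summand of the inverse formula associated to a partition `λ = (λ_1,…,λ_l)`:
`(−1)^l · g⁻¹ [ξ^{(j_1)}_{λ_1}, [ξ^{(j_2)}_{λ_2}, …, [ξ^{(j_{l−1})}_{λ_{l−1}}, ξ^{(j_l)}_{λ_l}] …]] g`,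
which for `l = 1` is `− g⁻¹ ξ^{(j)}_{λ_1} g`. -/
noncomputable def invTerm {n N : ℕ} (g : (Fin n → ℝ) → Matrix (Fin N) (Fin N) ℝ)
    (μ : ℕ → Fin n) (L : List (Finset ℕ)) (x : Fin n → ℝ) : Matrix (Fin N) (Fin N) ℝ :=
  ((-1 : ℝ) ^ L.length) •
    ((g x)⁻¹ *
      (L.dropLast.foldr (fun A acc => mcomm (xiBlock g μ A x) acc)
        (xiBlock g μ (L.getLastD ∅) x)) * g x)

/-! ### Smooth matrix-valued maps and the Leibniz rule -/

namespace InverseFormula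

section Analysis

variable {n N : ℕ}

theorem MSmooth.diffAt {f : (Fin n → ℝ) → Matrix (Fin N) (Fin N) ℝ} (hf : MSmooth f)
    (a b : Fin N) (x : Fin n → ℝ) : DifferentiableAt ℝ (fun y => f y a b) x :=
  ((hf a b).differentiable (by simp)).differentiableAt

theorem msmooth_const (A : Matrix (Fin N) (Fin N) ℝ) :
    MSmooth (fun _ : Fin n → ℝ => A) :=
  fun _ _ => contDiff_const

theorem MSmooth.mul {f h : (Fin n → ℝ) → Matrix (Fin N) (Fin N) ℝ}
    (hf : MSmooth f) (hh : MSmooth h) : MSmooth (fun x => f x * h x) := by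
  intro a b
  simp only [Matrix.mul_apply]
  exact ContDiff.sum fun i _ => (hf a i).mul (hh i b)

theorem MSmooth.sub {f h : (Fin n → ℝ) → Matrix (Fin N) (Fin N) ℝ}
    (hf : MSmooth f) (hh : MSmooth h) : MSmooth (fun x => f x - h x) := by
  intro a b
  simpa only [Matrix.sub_apply] using (hf a b).sub (hh a b)

theorem MSmooth.add {f h : (Fin n → ℝ) → Matrix (Fin N) (Fin N) ℝ}
    (hf : MSmooth f) (hh : MSmooth h) : MSmooth (fun x => f x + h x) := by
  intro a b
  simpa only [Matrix.add_apply] using (hf a b).add (hh a b)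

theorem MSmooth.smul {f : (Fin n → ℝ) → Matrix (Fin N) (Fin N) ℝ} (c : ℝ)
    (hf : MSmooth f) : MSmooth (fun x => c • f x) := by
  intro a b
  simpa only [Matrix.smul_apply, smul_eq_mul] using contDiff_const.mul (hf a b)

theorem MSmooth.mcomm {f h : (Fin n → ℝ) → Matrix (Fin N) (Fin N) ℝ}
    (hf : MSmooth f) (hh : MSmooth h) : MSmooth (fun x => mcomm (f x) (h x)) :=
  MSmooth.sub (MSmooth.mul hf hh) (MSmooth.mul hh hf)

theorem MSmooth.det {f : (Fin n → ℝ) → Matrix (Fin N) (Fin N) ℝ}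
    (hf : MSmooth f) : ContDiff ℝ (⊤ : ℕ∞) (fun x => (f x).det) := by
  simp only [Matrix.det_apply']
  exact ContDiff.sum fun σ _ => contDiff_const.mul (contDiff_prod fun i _ => hf _ _)

/-- By Cramer's rule. -/
theorem MSmooth.inv {f : (Fin n → ℝ) → Matrix (Fin N) (Fin N) ℝ}
    (hf : MSmooth f) (hinv : ∀ x, IsUnit (f x)) : MSmooth (fun x => (f x)⁻¹) := by
  intro a b
  simp only [Matrix.inv_def, Matrix.smul_apply, Matrix.adjugate_apply, smul_eq_mul,
    Ring.inverse_eq_inv']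
  refine ((MSmooth.det hf).inv fun x => ?_).mul (MSmooth.det fun c d => ?_)
  · exact ((Matrix.isUnit_iff_isUnit_det _).1 (hinv x)).ne_zero
  · by_cases h : c = b
    · subst h
      simpa using contDiff_const
    · simpa [Matrix.updateRow_ne h] using hf c d

theorem MSmooth.pd {f : (Fin n → ℝ) → Matrix (Fin N) (Fin N) ℝ}
    (hf : MSmooth f) (ν : Fin n) : MSmooth (pd ν f) := by
  intro a b
  simp only [_root_.pd, Matrix.of_apply]
  exact ((hf a b).fderiv_right (m := (⊤ : ℕ∞)) (by simp)).clm_apply contDiff_const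

theorem pd_const (ν : Fin n) (A : Matrix (Fin N) (Fin N) ℝ) (x : Fin n → ℝ) :
    pd ν (fun _ => A) x = 0 := by
  ext a b
  simp [pd]

theorem pd_add (ν : Fin n) {f h : (Fin n → ℝ) → Matrix (Fin N) (Fin N) ℝ}
    (hf : MSmooth f) (hh : MSmooth h) (x : Fin n → ℝ) :
    pd ν (fun y => f y + h y) x = pd ν f x + pd ν h x := by
  ext a b
  simp only [pd, Matrix.of_apply, Matrix.add_apply]
  rw [fderiv_fun_add (MSmooth.diffAt hf a b x) (MSmooth.diffAt hh a b x)]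
  rfl

theorem pd_sub (ν : Fin n) {f h : (Fin n → ℝ) → Matrix (Fin N) (Fin N) ℝ}
    (hf : MSmooth f) (hh : MSmooth h) (x : Fin n → ℝ) :
    pd ν (fun y => f y - h y) x = pd ν f x - pd ν h x := by
  ext a b
  simp only [pd, Matrix.of_apply, Matrix.sub_apply]
  rw [fderiv_fun_sub (MSmooth.diffAt hf a b x) (MSmooth.diffAt hh a b x)]
  rfl

theorem pd_smul (ν : Fin n) {f : (Fin n → ℝ) → Matrix (Fin N) (Fin N) ℝ} (c : ℝ)
    (hf : MSmooth f) (x : Fin n → ℝ) :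
    pd ν (fun y => c • f y) x = c • pd ν f x := by
  ext a b
  simp only [pd, Matrix.of_apply, Matrix.smul_apply]
  rw [fderiv_fun_const_smul (MSmooth.diffAt hf a b x)]
  rfl

theorem pd_mul (ν : Fin n) {f h : (Fin n → ℝ) → Matrix (Fin N) (Fin N) ℝ}
    (hf : MSmooth f) (hh : MSmooth h) (x : Fin n → ℝ) :
    pd ν (fun y => f y * h y) x = pd ν f x * h x + f x * pd ν h x := by
  ext a b
  simp only [pd, Matrix.of_apply, Matrix.add_apply, Matrix.mul_apply]
  rw [fderiv_fun_sum fun i _ => (MSmooth.diffAt hf a i x).fun_mul (MSmooth.diffAt hh i b x),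
    ← Finset.sum_add_distrib, sum_apply]
  refine Finset.sum_congr rfl fun i _ => ?_
  rw [fderiv_fun_mul (MSmooth.diffAt hf a i x) (MSmooth.diffAt hh i b x)]
  simp only [add_apply, smul_apply, smul_eq_mul]
  ring

theorem pd_mcomm (ν : Fin n) {f h : (Fin n → ℝ) → Matrix (Fin N) (Fin N) ℝ}
    (hf : MSmooth f) (hh : MSmooth h) (x : Fin n → ℝ) :
    pd ν (fun y => mcomm (f y) (h y)) x = mcomm (pd ν f x) (h x) + mcomm (f x) (pd ν h x) := by
  simp only [mcomm]
  rw [pd_sub ν (MSmooth.mul hf hh) (MSmooth.mul hh hf), pd_mul ν hf hh, pd_mul ν hh hf]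
  abel

theorem msmooth_list_sum {ι : Type*} (l : List ι)
    {F : ι → (Fin n → ℝ) → Matrix (Fin N) (Fin N) ℝ} (hF : ∀ i ∈ l, MSmooth (F i)) :
    MSmooth (fun y => (l.map fun i => F i y).sum) := by
  induction l with
  | nil => simpa using msmooth_const 0
  | cons i l ih =>
    simp only [List.map_cons, List.sum_cons]
    exact MSmooth.add (hF i (by simp)) (ih fun k hk => hF k (by simp [hk]))

theorem pd_list_sum (ν : Fin n) {ι : Type*} (l : List ι)
    {F : ι → (Fin n → ℝ) → Matrix (Fin N) (Fin N) ℝ} (hF : ∀ i ∈ l, MSmooth (F i))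
    (x : Fin n → ℝ) :
    pd ν (fun y => (l.map fun i => F i y).sum) x = (l.map fun i => pd ν (F i) x).sum := by
  induction l with
  | nil => simpa using pd_const ν 0 x
  | cons i l ih =>
    simp only [List.map_cons, List.sum_cons]
    have hl : ∀ k ∈ l, MSmooth (F k) := fun k hk => hF k (by simp [hk])
    rw [pd_add ν (hF i (by simp)) (msmooth_list_sum l hl), ih hl]

variable {g : (Fin n → ℝ) → Matrix (Fin N) (Fin N) ℝ}

theorem inv_mul_self (hinv : ∀ x, IsUnit (g x)) (x : Fin n → ℝ) : (g x)⁻¹ * g x = 1 :=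
  Matrix.nonsing_inv_mul _ ((Matrix.isUnit_iff_isUnit_det _).1 (hinv x))

theorem mul_inv_self (hinv : ∀ x, IsUnit (g x)) (x : Fin n → ℝ) : g x * (g x)⁻¹ = 1 :=
  Matrix.mul_nonsing_inv _ ((Matrix.isUnit_iff_isUnit_det _).1 (hinv x))

theorem pd_inv (ν : Fin n) (hg : MSmooth g) (hinv : ∀ x, IsUnit (g x)) (x : Fin n → ℝ) :
    pd ν (fun y => (g y)⁻¹) x = -((g x)⁻¹ * pd ν g x * (g x)⁻¹) := by
  have h := pd_mul ν hg (MSmooth.inv hg hinv) x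
  simp only [mul_inv_self hinv] at h
  rw [pd_const] at h
  have h2 := congrArg (fun M => (g x)⁻¹ * M) h
  simp only [mul_zero, mul_add, ← mul_assoc, inv_mul_self hinv, one_mul] at h2
  rw [eq_neg_iff_add_eq_zero, add_comm]
  exact h2.symm

/-- Differentiating a conjugate `g⁻¹ C g` produces the covariant derivative
`∂_ν C - [ξ_ν, C]`; this is the source of every commutator in the formula. -/
theorem pd_conj (ν : Fin n) (hg : MSmooth g) (hinv : ∀ x, IsUnit (g x))
    {C : (Fin n → ℝ) → Matrix (Fin N) (Fin N) ℝ} (hC : MSmooth C) (x : Fin n → ℝ) :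
    pd ν (fun y => (g y)⁻¹ * C y * g y) x
      = (g x)⁻¹ * (pd ν C x - mcomm (pd ν g x * (g x)⁻¹) (C x)) * g x := by
  rw [pd_mul ν (MSmooth.mul (MSmooth.inv hg hinv) hC) hg,
    pd_mul ν (MSmooth.inv hg hinv) hC, pd_inv ν hg hinv]
  have h : pd ν g x = pd ν g x * (g x)⁻¹ * g x := by
    rw [mul_assoc, inv_mul_self hinv, mul_one]
  simp only [mcomm]
  conv_lhs => enter [2]; rw [h]
  noncomm_ring

theorem msmooth_xiJ (hg : MSmooth g) (hinv : ∀ x, IsUnit (g x)) :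
    ∀ l : List (Fin n), MSmooth (xiJ g l)
  | [] => by simpa only [xiJ] using msmooth_const 1
  | [ν] => by simpa only [xiJ] using MSmooth.mul (MSmooth.pd hg ν) (MSmooth.inv hg hinv)
  | ν :: ρ :: l => by simpa only [xiJ] using MSmooth.pd (msmooth_xiJ hg hinv (ρ :: l)) ν

theorem xiJ_cons (g : (Fin n → ℝ) → Matrix (Fin N) (Fin N) ℝ) (ν : Fin n)
    {l : List (Fin n)} (hl : l ≠ []) : xiJ g (ν :: l) = pd ν (xiJ g l) := by
  cases l with
  | nil => exact absurd rfl hl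
  | cons ρ l => rfl

theorem xiBlock_singleton (g : (Fin n → ℝ) → Matrix (Fin N) (Fin N) ℝ) (μ : ℕ → Fin n)
    (a : ℕ) (x : Fin n → ℝ) : xiBlock g μ {a} x = pd (μ a) g x * (g x)⁻¹ := by
  simp [xiBlock, tupleOf, xiJ]

/-- A new smallest index is the outermost derivative. -/
theorem xiBlock_insert (g : (Fin n → ℝ) → Matrix (Fin N) (Fin N) ℝ) (μ : ℕ → Fin n)
    {a : ℕ} {A : Finset ℕ} (hA : A.Nonempty) (ha : ∀ b ∈ A, a < b) :
    xiBlock g μ (insert a A) = pd (μ a) (xiBlock g μ A) := by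
  have hs : (insert a A).sort (· ≤ ·) = a :: A.sort (· ≤ ·) :=
    Finset.sort_insert _ (by exact fun b hb => (ha b hb).le) (by exact fun h => (ha a h).false)
  simp only [xiBlock, tupleOf, hs, List.map_cons]
  refine xiJ_cons g (μ a) fun h => ?_
  have h2 := congrArg List.length h
  simp at h2
  exact hA.ne_empty h2

end Analysis

/-! ### Generating the ordered partitions by inserting a new minimum -/

/-- All ways to adjoin `a` to exactly one block of `L`. -/
def adjoin (a : ℕ) : List (Finset ℕ) → List (List (Finset ℕ))
  | [] => []
  | A :: L => (insert a A :: L) :: (adjoin a L).map (A :: ·)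

/-- The partitions obtained from `L` by inserting a new minimum `a`: as a singleton block,
necessarily in first position since blocks are ordered by their maxima, or into one of the
blocks. -/
def step (a : ℕ) (L : List (Finset ℕ)) : List (List (Finset ℕ)) :=
  ({a} :: L) :: adjoin a L

/-- The partitions of the entries of an increasing list, with blocks ordered by their maxima. -/
def parts : List ℕ → List (List (Finset ℕ))
  | [] => [[]]
  | a :: s => (parts s).flatMap (step a)

/-- The condition `IsPAnti` for an arbitrary ground set `S`, in a form that is convenient to
split along `++`. -/
def Anti (S : Finset ℕ) (L : List (Finset ℕ)) : Prop :=
  (∀ A ∈ L, A.Nonempty) ∧ L.Pairwise (fun A B => Disjoint A B ∧ A.sup id < B.sup id) ∧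
    ∀ x, x ∈ S ↔ ∃ A ∈ L, x ∈ A

theorem mem_foldr_union (L : List (Finset ℕ)) (x : ℕ) :
    x ∈ L.foldr (· ∪ ·) ∅ ↔ ∃ A ∈ L, x ∈ A := by
  induction L with
  | nil => simp
  | cons A L ih => simp [ih]

theorem isPAnti_iff (j : ℕ) (L : List (Finset ℕ)) :
    IsPAnti j L ↔ Anti (Finset.Icc 1 j) L := by
  have hc : (L.map fun A => A.sup id).IsChain (· < ·)
      ↔ L.Pairwise (fun A B => A.sup id < B.sup id) := by
    rw [List.isChain_iff_pairwise, List.pairwise_map]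
  have hu : L.foldr (· ∪ ·) ∅ = Finset.Icc 1 j
      ↔ ∀ x, x ∈ Finset.Icc 1 j ↔ ∃ A ∈ L, x ∈ A := by
    rw [Finset.ext_iff]
    exact forall_congr' fun x => by rw [mem_foldr_union]; exact iff_comm
  unfold IsPAnti IsPartitionOf Anti
  rw [List.pairwise_and_iff, ← hu, ← hc]
  tauto

theorem mem_adjoin (a : ℕ) (L L' : List (Finset ℕ)) :
    L' ∈ adjoin a L ↔ ∃ L₁ A L₂, L = L₁ ++ A :: L₂ ∧ L' = L₁ ++ insert a A :: L₂ := by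
  induction L generalizing L' with
  | nil => simp [adjoin]
  | cons B L ih =>
    simp only [adjoin, List.mem_cons, List.mem_map, ih]
    constructor
    · rintro (rfl | ⟨_, ⟨L₁, A, L₂, rfl, rfl⟩, rfl⟩)
      · exact ⟨[], B, L, rfl, rfl⟩
      · exact ⟨B :: L₁, A, L₂, rfl, rfl⟩
    · rintro ⟨L₁, A, L₂, h, rfl⟩
      cases L₁ with
      | nil =>
        simp only [List.nil_append, List.cons.injEq] at h
        obtain ⟨rfl, rfl⟩ := h
        exact Or.inl rfl
      | cons C L₁ =>
        simp only [List.cons_append, List.cons.injEq] at h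
        obtain ⟨rfl, rfl⟩ := h
        exact Or.inr ⟨_, ⟨L₁, A, L₂, rfl, rfl⟩, rfl⟩

theorem sup_insert_min {a : ℕ} {A : Finset ℕ} (hA : A.Nonempty) (ha : ∀ b ∈ A, a < b) :
    (insert a A).sup id = A.sup id := by
  obtain ⟨b, hb⟩ := hA
  have : b ≤ A.sup id := Finset.le_sup (f := id) hb
  have := ha b hb
  simp only [Finset.sup_insert, id]
  exact sup_eq_right.2 (by omega)

theorem sup_lt_of_lt {a : ℕ} {A : Finset ℕ} (hA : A.Nonempty) (ha : ∀ b ∈ A, a < b) :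
    a < A.sup id := by
  obtain ⟨b, hb⟩ := hA
  exact (ha b hb).trans_le (Finset.le_sup (f := id) hb)

theorem Anti.lt {a : ℕ} {S : Finset ℕ} (ha : ∀ b ∈ S, a < b) {L : List (Finset ℕ)}
    (h : Anti S L) : ∀ A ∈ L, ∀ b ∈ A, a < b :=
  fun A hA b hb => ha b ((h.2.2 b).2 ⟨A, hA, hb⟩)

/-- Adjoining a new minimum to a block changes neither disjointness nor maxima. -/
theorem anti_insert_iff {a : ℕ} {S : Finset ℕ} (ha : ∀ b ∈ S, a < b)
    {L₁ L₂ : List (Finset ℕ)} {A : Finset ℕ} (hA : A.Nonempty) (haA : a ∉ A)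
    (h1 : ∀ B ∈ L₁, a ∉ B) (h2 : ∀ B ∈ L₂, a ∉ B) (hlt : ∀ b ∈ A, a < b) :
    Anti (insert a S) (L₁ ++ insert a A :: L₂) ↔ Anti S (L₁ ++ A :: L₂) := by
  have haS : a ∉ S := fun h => (ha a h).false
  have hsup := sup_insert_min hA hlt
  unfold Anti
  refine and_congr ?_ (and_congr ?_ ?_)
  · simp [hA, or_imp, forall_and]
  · simp only [List.pairwise_append, List.pairwise_cons, hsup, Finset.disjoint_insert_left,
      Finset.disjoint_insert_right, List.mem_cons, forall_eq_or_imp]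
    grind
  · simp only [List.mem_append, List.mem_cons, Finset.mem_insert]
    constructor
    · intro h x
      have := h x
      by_cases hx : x = a
      · subst hx
        grind
      · grind
    · intro h x
      have := h x
      by_cases hx : x = a
      · subst hx
        grind
      · grind

/-- Inserting a new minimum generates all ordered partitions of the larger set. -/
theorem anti_insert {a : ℕ} {S : Finset ℕ} (ha : ∀ b ∈ S, a < b) (L' : List (Finset ℕ)) :
    Anti (insert a S) L' ↔ ∃ L, Anti S L ∧ L' ∈ step a L := by
  have haS : a ∉ S := fun h => (ha a h).false
  constructor
  · intro h
    have hle : ∀ A ∈ L', ∀ b ∈ A, a ≤ b := by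
      intro A hA b hb
      rcases Finset.mem_insert.1 ((h.2.2 b).2 ⟨A, hA, hb⟩) with rfl | hS
      · exact le_rfl
      · exact (ha b hS).le
    obtain ⟨B, hB, haB⟩ := (h.2.2 a).1 (Finset.mem_insert_self a S)
    obtain ⟨L₁, L₂, rfl⟩ := List.append_of_mem hB
    have hp := h.2.1
    simp only [List.pairwise_append, List.pairwise_cons, List.mem_cons,
      forall_eq_or_imp] at hp
    have h1 : ∀ C ∈ L₁, a ∉ C := fun C hC haC =>
      Finset.disjoint_left.1 (hp.2.2 C hC).1.1 haC haB
    have h2 : ∀ C ∈ L₂, a ∉ C := fun C hC haC =>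
      Finset.disjoint_left.1 (hp.2.1.1 C hC).1 haB haC
    by_cases hBa : B = {a}
    · subst hBa
      -- A block before `{a}` would have maximum below `a`, the minimum of the ground set.
      have hL₁ : L₁ = [] := by
        rw [List.eq_nil_iff_forall_not_mem]
        intro C hC
        obtain ⟨c, hc⟩ := h.1 C (by simp [hC])
        have h3 := (hp.2.2 C hC).1.2
        have h4 : c ≤ C.sup id := Finset.le_sup (f := id) hc
        have h5 := hle C (by simp [hC]) c hc
        simp at h3
        omega
      subst hL₁
      refine ⟨L₂, ⟨fun A hA => h.1 A (by simp [hA]), hp.2.1.2, fun x => ?_⟩, by simp [step]⟩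
      have hx := h.2.2 x
      simp only [List.nil_append, List.mem_cons, Finset.mem_insert, exists_eq_or_imp,
        Finset.mem_singleton] at hx
      by_cases hxa : x = a
      · subst hxa
        grind
      · grind
    · have hne : (B.erase a).Nonempty := by
        rw [Finset.nonempty_iff_ne_empty, Ne, Finset.erase_eq_empty_iff]
        rintro (rfl | h6)
        · simp at haB
        · exact hBa h6
      refine ⟨L₁ ++ B.erase a :: L₂, ?_, ?_⟩
      · rw [← anti_insert_iff ha hne (by simp) h1 h2, Finset.insert_erase haB]
        · exact h
        · intro b hb
          have := hle B (by simp) b (Finset.mem_of_mem_erase hb)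
          have := Finset.ne_of_mem_erase hb
          omega
      · rw [step, List.mem_cons, mem_adjoin]
        exact Or.inr ⟨L₁, B.erase a, L₂, rfl, by rw [Finset.insert_erase haB]⟩
  · rintro ⟨L, h, hL'⟩
    have hlt := Anti.lt ha h
    have hnot : ∀ A ∈ L, a ∉ A := fun A hA haA => (hlt A hA a haA).false
    rw [step, List.mem_cons, mem_adjoin] at hL'
    rcases hL' with rfl | ⟨L₁, A, L₂, rfl, rfl⟩
    · refine ⟨?_, ?_, fun x => ?_⟩
      · simpa using h.1
      · refine List.pairwise_cons.2 ⟨fun A hA => ⟨?_, ?_⟩, h.2.1⟩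
        · simpa using hnot A hA
        · simpa using sup_lt_of_lt (h.1 A hA) (hlt A hA)
      · simp [h.2.2 x]
    · rw [anti_insert_iff ha (h.1 A (by simp)) (hnot A (by simp))
        (fun B hB => hnot B (by simp [hB])) (fun B hB => hnot B (by simp [hB]))
        (hlt A (by simp))]
      exact h

theorem mem_parts {s : List ℕ} (hs : s.Pairwise (· < ·)) (L : List (Finset ℕ)) :
    L ∈ parts s ↔ Anti s.toFinset L := by
  induction s generalizing L with
  | nil =>
    simp only [parts, List.mem_singleton, List.toFinset_nil]
    constructor
    · rintro rfl
      simp [Anti]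
    · intro h
      rw [List.eq_nil_iff_forall_not_mem]
      intro A hA
      obtain ⟨b, hb⟩ := h.1 A hA
      simpa using (h.2.2 b).2 ⟨A, hA, hb⟩
  | cons a s ih =>
    rw [List.pairwise_cons] at hs
    rw [List.toFinset_cons, anti_insert (by simpa using hs.1)]
    simp only [parts, List.mem_flatMap, ih hs.2]

/-- Deletes the element `a` from a partition; a left inverse of `step a`. -/
def del (a : ℕ) (L : List (Finset ℕ)) : List (Finset ℕ) :=
  (L.map fun A => A.erase a).filter (fun A => A ≠ ∅)

theorem del_of_not_mem {a : ℕ} {L : List (Finset ℕ)} (hne : ∀ A ∈ L, A.Nonempty)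
    (ha : ∀ A ∈ L, a ∉ A) : del a L = L := by
  have h1 : L.map (fun A => A.erase a) = L := by
    conv_rhs => rw [← List.map_id L]
    exact List.map_congr_left fun A hA => Finset.erase_eq_of_notMem (ha A hA)
  rw [del, h1, List.filter_eq_self]
  intro A hA
  simpa using (hne A hA).ne_empty

theorem del_step {a : ℕ} {L L' : List (Finset ℕ)} (hne : ∀ A ∈ L, A.Nonempty)
    (ha : ∀ A ∈ L, a ∉ A) (h : L' ∈ step a L) : del a L' = L := by
  have h0 := del_of_not_mem hne ha
  rw [step, List.mem_cons, mem_adjoin] at h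
  rcases h with rfl | ⟨L₁, A, L₂, rfl, rfl⟩
  · simpa [del] using h0
  · have haA := ha A (by simp)
    rw [← h0]
    simp [del, Finset.erase_insert haA, Finset.erase_eq_of_notMem haA]

theorem nodup_step {a : ℕ} {L : List (Finset ℕ)} (hne : ∀ A ∈ L, A.Nonempty)
    (ha : ∀ A ∈ L, a ∉ A) : (step a L).Nodup := by
  have hadj : (adjoin a L).Nodup := by
    clear hne
    induction L with
    | nil => simp [adjoin]
    | cons A L ih =>
      rw [adjoin, List.nodup_cons]
      refine ⟨?_, (ih fun B hB => ha B (by simp [hB])).map fun _ _ h => (List.cons.inj h).2⟩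
      rw [List.mem_map]
      rintro ⟨M, -, h⟩
      apply ha A (by simp)
      rw [(List.cons.inj h).1]
      simp
  rw [step, List.nodup_cons]
  refine ⟨fun h => ?_, hadj⟩
  rw [mem_adjoin] at h
  obtain ⟨L₁, A, L₂, rfl, h⟩ := h
  have := congrArg List.length h
  simp at this

theorem nodup_parts {s : List ℕ} (hs : s.Pairwise (· < ·)) : (parts s).Nodup := by
  induction s with
  | nil => simp [parts]
  | cons a s ih =>
    rw [List.pairwise_cons] at hs
    have key : ∀ L ∈ parts s, (∀ A ∈ L, A.Nonempty) ∧ ∀ A ∈ L, a ∉ A := by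
      intro L hL
      have h := (mem_parts hs.2 L).1 hL
      exact ⟨h.1, fun A hA haA => (Anti.lt (by simpa using hs.1) h A hA a haA).false⟩
    rw [parts, List.nodup_flatMap]
    refine ⟨fun L hL => nodup_step (key L hL).1 (key L hL).2, ?_⟩
    refine (ih hs.2).imp_of_mem fun {L M} hL hM hne => ?_
    intro K hK hK'
    exact hne ((del_step (key L hL).1 (key L hL).2 hK).symm.trans
      (del_step (key M hM).1 (key M hM).2 hK'))

theorem parts_ne_nil {s : List ℕ} (hs : s ≠ []) {L : List (Finset ℕ)} (hL : L ∈ parts s) :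
    L ≠ [] := by
  cases s with
  | nil => exact absurd rfl hs
  | cons a s =>
    rw [parts, List.mem_flatMap] at hL
    obtain ⟨M, -, h⟩ := hL
    rw [step, List.mem_cons, mem_adjoin] at h
    rcases h with rfl | ⟨L₁, A, L₂, -, rfl⟩ <;> simp

/-! ### Nested commutators and the recursion -/

section Recursion

variable {n N : ℕ}

/-- The nested commutator `[ξ_{λ_1}, [ξ_{λ_2}, …, ξ_{λ_l}] …]`, with value `0` on the empty
list. -/
noncomputable def nest (g : (Fin n → ℝ) → Matrix (Fin N) (Fin N) ℝ) (μ : ℕ → Fin n) :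
    List (Finset ℕ) → (Fin n → ℝ) → Matrix (Fin N) (Fin N) ℝ
  | [] => fun _ => 0
  | [A] => xiBlock g μ A
  | A :: B :: L => fun x => mcomm (xiBlock g μ A x) (nest g μ (B :: L) x)

theorem nest_cons (g : (Fin n → ℝ) → Matrix (Fin N) (Fin N) ℝ) (μ : ℕ → Fin n)
    (A : Finset ℕ) {L : List (Finset ℕ)} (hL : L ≠ []) :
    nest g μ (A :: L) = fun x => mcomm (xiBlock g μ A x) (nest g μ L x) := by
  cases L with
  | nil => exact absurd rfl hL
  | cons B L => rfl

theorem foldr_eq_nest (g : (Fin n → ℝ) → Matrix (Fin N) (Fin N) ℝ) (μ : ℕ → Fin n)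
    (x : Fin n → ℝ) : ∀ L : List (Finset ℕ), L ≠ [] →
      L.dropLast.foldr (fun A acc => mcomm (xiBlock g μ A x) acc)
        (xiBlock g μ (L.getLastD ∅) x) = nest g μ L x
  | [], h => absurd rfl h
  | [A], _ => by simp [nest]
  | A :: B :: L, _ => by
    have := foldr_eq_nest g μ x (B :: L) (by simp)
    simp only [nest, ← this]
    simp

variable {g : (Fin n → ℝ) → Matrix (Fin N) (Fin N) ℝ}

theorem msmooth_nest (hg : MSmooth g) (hinv : ∀ x, IsUnit (g x)) (μ : ℕ → Fin n) :
    ∀ L : List (Finset ℕ), MSmooth (nest g μ L)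
  | [] => by simpa only [nest] using msmooth_const 0
  | [_] => msmooth_xiJ hg hinv _
  | A :: B :: L => 
    MSmooth.mcomm (f := xiBlock g μ A) (msmooth_xiJ hg hinv _) (msmooth_nest hg hinv μ (B :: L))

theorem mcomm_list_sum {ι : Type*} (X : Matrix (Fin N) (Fin N) ℝ) (l : List ι)
    (F : ι → Matrix (Fin N) (Fin N) ℝ) :
    mcomm X (l.map F).sum = (l.map fun i => mcomm X (F i)).sum := by
  induction l with
  | nil => simp [mcomm]
  | cons i l ih =>
    rw [List.map_cons, List.sum_cons, List.map_cons, List.sum_cons, ← ih]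
    simp only [mcomm]
    noncomm_ring

/-- The Leibniz rule for nested commutators: the derivative hits each block once, which
adjoins the new minimal index to that block. -/
theorem pd_nest (hg : MSmooth g) (hinv : ∀ x, IsUnit (g x)) (μ : ℕ → Fin n) (a : ℕ)
    (x : Fin n → ℝ) : ∀ L : List (Finset ℕ), (∀ A ∈ L, A.Nonempty) →
      (∀ A ∈ L, ∀ b ∈ A, a < b) →
      pd (μ a) (nest g μ L) x = ((adjoin a L).map fun L' => nest g μ L' x).sum
  | [], _, _ => by simpa [nest, adjoin] using pd_const (μ a) 0 x
  | [A], hne, hlt => by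
    simp [nest, adjoin, xiBlock_insert g μ (hne A (by simp)) (hlt A (by simp))]
  | A :: B :: L, hne, hlt => by
    have ih := pd_nest hg hinv μ a x (B :: L) (fun C hC => hne C (List.mem_cons_of_mem _ hC))
      (fun C hC => hlt C (List.mem_cons_of_mem _ hC))
    have hcons : ∀ L' ∈ adjoin a (B :: L),
        nest g μ (A :: L') x = mcomm (xiBlock g μ A x) (nest g μ L' x) := by
      intro L' hL'
      rw [nest_cons]
      rintro rfl
      simp [mem_adjoin] at hL'
    rw [nest, pd_mcomm (μ a) (f := xiBlock g μ A) (msmooth_xiJ hg hinv _) (msmooth_nest hg hinv μ _), ih,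
      mcomm_list_sum, adjoin.eq_2 a A (B :: L), List.map_cons, List.sum_cons, List.map_map,
      nest_cons g μ (insert a A) (List.cons_ne_nil B L), xiBlock_insert g μ (hne A (by simp)) (hlt A (by simp))]
    congr 2
    exact List.map_congr_left fun L' hL' => (hcons L' hL').symm

/-- The summand of the formula, written with `nest`. -/
noncomputable def term (g : (Fin n → ℝ) → Matrix (Fin N) (Fin N) ℝ) (μ : ℕ → Fin n)
    (L : List (Finset ℕ)) (x : Fin n → ℝ) : Matrix (Fin N) (Fin N) ℝ :=
  ((-1 : ℝ) ^ L.length) • ((g x)⁻¹ * nest g μ L x * g x)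

theorem conj_list_sum {ι : Type*} (c : ℝ) (X Y : Matrix (Fin N) (Fin N) ℝ) (l : List ι)
    (F : ι → Matrix (Fin N) (Fin N) ℝ) :
    c • (X * (l.map F).sum * Y) = (l.map fun i => c • (X * F i * Y)).sum := by
  induction l with
  | nil => simp
  | cons i l ih => simp only [List.map_cons, List.sum_cons, ← ih, mul_add, add_mul, smul_add]

theorem msmooth_term (hg : MSmooth g) (hinv : ∀ x, IsUnit (g x)) (μ : ℕ → Fin n)
    (L : List (Finset ℕ)) : MSmooth (term g μ L) :=
  MSmooth.smul _ (MSmooth.mul (MSmooth.mul (MSmooth.inv hg hinv) (msmooth_nest hg hinv μ L)) hg)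

/-- Differentiation of a summand in the direction of a new minimal index `a` gives the sum over
the partitions generated by `step a`: the connection term `-[ξ_a, ·]` accounts for the new
singleton block, the Leibniz rule for the rest. -/
theorem pd_term (hg : MSmooth g) (hinv : ∀ x, IsUnit (g x)) (μ : ℕ → Fin n) (a : ℕ)
    (x : Fin n → ℝ) {L : List (Finset ℕ)} (hL : L ≠ []) (hne : ∀ A ∈ L, A.Nonempty)
    (hlt : ∀ A ∈ L, ∀ b ∈ A, a < b) :
    pd (μ a) (term g μ L) x = ((step a L).map fun L' => term g μ L' x).sum := by
  have hlen : ∀ L' ∈ adjoin a L, L'.length = L.length := by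
    intro L' hL'
    rw [mem_adjoin] at hL'
    obtain ⟨L₁, A, L₂, rfl, rfl⟩ := hL'
    simp
  have h1 : ((adjoin a L).map fun L' => term g μ L' x).sum
      = (-1 : ℝ) ^ L.length • ((g x)⁻¹ * pd (μ a) (nest g μ L) x * g x) := by
    rw [pd_nest hg hinv μ a x L hne hlt, conj_list_sum]
    congr 1
    exact List.map_congr_left fun L' hL' => by rw [term, hlen L' hL']
  have h2 : pd (μ a) (term g μ L) x = (-1 : ℝ) ^ L.length •
      pd (μ a) (fun y => (g y)⁻¹ * nest g μ L y * g y) x :=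
    pd_smul (μ a) _ (MSmooth.mul (MSmooth.mul (MSmooth.inv hg hinv)
      (msmooth_nest hg hinv μ L)) hg) x
  rw [step, List.map_cons, List.sum_cons, h1, h2,
    pd_conj (μ a) hg hinv (msmooth_nest hg hinv μ L), term, nest_cons g μ _ hL]
  beta_reduce
  rw [xiBlock_singleton, List.length_cons, pow_succ, mul_neg_one, neg_smul, mul_sub, sub_mul,
    smul_sub]
  abel

theorem xiJ_inv (hg : MSmooth g) (hinv : ∀ x, IsUnit (g x)) (μ : ℕ → Fin n) :
    ∀ s : List ℕ, s ≠ [] → s.Pairwise (· < ·) → ∀ x,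
      xiJ (fun y => (g y)⁻¹) (s.map μ) x = ((parts s).map fun L => term g μ L x).sum
  | [], h, _, _ => absurd rfl h
  | [a], _, _, x => by
    have h : ((g x)⁻¹)⁻¹ = g x :=
      Matrix.nonsing_inv_nonsing_inv _ ((Matrix.isUnit_iff_isUnit_det _).1 (hinv x))
    simp [parts, step, adjoin, xiJ, term, nest, xiBlock_singleton, pd_inv (μ a) hg hinv, h,
      mul_assoc]
  | a :: b :: t, _, hs, x => by
    rw [List.pairwise_cons] at hs
    have ih := xiJ_inv hg hinv μ (b :: t) (by simp) hs.2
    rw [List.map_cons, xiJ_cons _ _ (by simp), funext ih,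
      pd_list_sum (μ a) _ fun L _ => msmooth_term hg hinv μ L, parts.eq_2 a,
      List.map_flatMap, List.flatMap_def, List.sum_flatten, List.map_map]
    congr 1
    refine List.map_congr_left fun L hL => ?_
    have h := (mem_parts hs.2 L).1 hL
    exact pd_term hg hinv μ a x (parts_ne_nil (by simp) hL) h.1
      (Anti.lt (by simpa using hs.1) h)

end Recursion

end InverseFormula

/-- coordinate form of the inverse-element formula of `J^k(X,G)`: with
`ω^{(j)}` the trivialized components of the pointwise inverse `ḡ(x) = g(x)⁻¹`, for every
`j ≥ 1` and every tuple `(μ_1,…,μ_j)` (given by `μ : ℕ → Fin n` on indices `1,…,j`),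
pointwise `ω^{(j)}_{μ_1…μ_j} = Σ_{λ ∈ P^a(j)} (−1)^l g⁻¹ [ξ^{(j_1)}_{λ_1}, […, [ξ^{(j_{l−1})}_{λ_{l−1}}, ξ^{(j_l)}_{λ_l}] …]] g`. -/
theorem inverse_formula (n N : ℕ) (hn : 1 ≤ n) (hN : 1 ≤ N)
    (g : (Fin n → ℝ) → Matrix (Fin N) (Fin N) ℝ)
    (hg : MSmooth g) (hinv : ∀ x, IsUnit (g x))
    (j : ℕ) (hj : 1 ≤ j) (μ : ℕ → Fin n) (x : Fin n → ℝ) :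
    xiBlock (fun y => (g y)⁻¹) μ (Finset.Icc 1 j) x
      = ∑ᶠ L ∈ {L : List (Finset ℕ) | IsPAnti j L}, invTerm g μ L x := by
  classical
  set s := (Finset.Icc 1 j).sort (· ≤ ·)
  have hs : s.Pairwise (· < ·) := (Finset.sortedLT_sort _).pairwise
  have hsS : s.toFinset = Finset.Icc 1 j := Finset.sort_toFinset _ _
  have hne : s ≠ [] := by
    intro h
    rw [h] at hsS
    have : (1 : ℕ) ∈ Finset.Icc 1 j := by simp [hj]
    rw [← hsS] at this
    simp at this
  have hset : {L : List (Finset ℕ) | IsPAnti j L}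
      = ((InverseFormula.parts s).toFinset : Set (List (Finset ℕ))) := by
    ext L
    rw [Set.mem_ofPred_eq, Finset.mem_coe, List.mem_toFinset, InverseFormula.mem_parts hs, hsS,
      InverseFormula.isPAnti_iff]
  rw [hset, finsum_mem_coe_finset, List.sum_toFinset _ (InverseFormula.nodup_parts hs)]
  refine (InverseFormula.xiJ_inv hg hinv μ s hne hs x).trans ?_
  congr 1
  refine List.map_congr_left fun L hL => ?_
  rw [InverseFormula.term, invTerm,
    InverseFormula.foldr_eq_nest g μ x L (InverseFormula.parts_ne_nil hne hL)]
end
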